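/- (Lossless pruning of the ColBERT_P score) Let D be a finite set of vectors in ℝ^n, let D⁻ = { v ∈ D : v is dominated by D } and D⁺ = D \ D⁻. Then for every finite multiset Q of query vectors in ℝ^n, Σ_{q ∈ Q} sup_{w ∈ D} max(0, ⟨q, w⟩) = Σ_{q ∈ Q} sup_{w ∈ D⁺} max(0, ⟨q, w⟩), where the supremum over the empty set is taken to be 0. -/

import Mathlib

/-! Fix a query `q`. A vector of `D` that maximizes `⟪q, ·⟫` with a positive value cannot be dominated
by `D`, since `q` itself witnesses the failure of domination. So pruning keeps every maximizer
that has positive value, and the supremum is unchanged. If no such vector exists, every truncated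
score is `0` and both suprema are `0`. -/

open scoped RealInnerProductSpace

noncomputable instance {n : ℕ} : DecidableEq (EuclideanSpace ℝ (Fin n)) :=
  Classical.decEq _

/-- A vector `v ∈ ℝ^n` is *dominated* by a finite set `D ⊆ ℝ^n` if for every query
vector `q ∈ ℝ^n`, either `⟪q, v⟫ ≤ 0` or there exists `w ∈ D` with `⟪q, w⟫ > ⟪q, v⟫`. -/
def Dominated {n : ℕ} (v : EuclideanSpace ℝ (Fin n))
    (D : Finset (EuclideanSpace ℝ (Fin n))) : Prop :=
  ∀ q : EuclideanSpace ℝ (Fin n), ⟪q, v⟫ ≤ 0 ∨ ∃ w ∈ D, ⟪q, w⟫ > ⟪q, v⟫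

/-- The pruned matching value `sup_{w ∈ S} max (0, ⟪q, w⟫)`; by the `Real.sSup`
convention this is `0` when `S` is empty. -/
noncomputable def prunedValue {n : ℕ} (S : Finset (EuclideanSpace ℝ (Fin n)))
    (q : EuclideanSpace ℝ (Fin n)) : ℝ :=
  sSup ((fun w => max 0 ⟪q, w⟫) '' (S : Set (EuclideanSpace ℝ (Fin n))))

lemma prunedValue_le {n : ℕ} {S : Finset (EuclideanSpace ℝ (Fin n))}
    {q : EuclideanSpace ℝ (Fin n)} {c : ℝ} (hc : 0 ≤ c) (h : ∀ w ∈ S, ⟪q, w⟫ ≤ c) :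
    prunedValue S q ≤ c := by
  refine Real.sSup_le ?_ hc
  rintro _ ⟨w, hw, rfl⟩
  exact max_le hc (h w hw)

lemma prunedValue_nonneg {n : ℕ} (S : Finset (EuclideanSpace ℝ (Fin n)))
    (q : EuclideanSpace ℝ (Fin n)) : 0 ≤ prunedValue S q := by
  refine Real.sSup_nonneg ?_
  rintro _ ⟨w, -, rfl⟩
  exact le_max_left _ _

lemma inner_le_prunedValue {n : ℕ} {S : Finset (EuclideanSpace ℝ (Fin n))}
    (q : EuclideanSpace ℝ (Fin n)) {w : EuclideanSpace ℝ (Fin n)} (hw : w ∈ S) :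
    ⟪q, w⟫ ≤ prunedValue S q :=
  (le_max_right 0 _).trans
    (le_csSup (S.finite_toSet.image _).bddAbove (Set.mem_image_of_mem _ hw))

/-- If `P ⊆ D` retains every vector of `D` that is not dominated by `D`, then `P` and `D` have
the same matching value for each query. -/
lemma prunedValue_eq_of_undominated {n : ℕ} {D P : Finset (EuclideanSpace ℝ (Fin n))}
    (hPD : P ⊆ D) (hP : ∀ v ∈ D, ¬ Dominated v D → v ∈ P) (q : EuclideanSpace ℝ (Fin n)) :
    prunedValue D q = prunedValue P q := by
  refine le_antisymm (prunedValue_le (prunedValue_nonneg P q) fun w hw => ?_)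
    (prunedValue_le (prunedValue_nonneg D q) fun w hw => inner_le_prunedValue q (hPD hw))
  obtain ⟨v, hv, hmax⟩ := D.exists_max_image (fun v => ⟪q, v⟫) ⟨w, hw⟩
  refine (hmax w hw).trans ?_
  rcases le_or_gt ⟪q, v⟫ 0 with h0 | h0
  · exact h0.trans (prunedValue_nonneg P q)
  · refine inner_le_prunedValue q (hP v hv fun hdom => ?_)
    rcases hdom q with h | ⟨u, hu, h⟩
    · exact h.not_gt h0
    · exact (hmax u hu).not_gt h

/-- Lossless pruning of the ColBERT_P score: with `D⁻ = {v ∈ D | v ≺ D}`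
and `D⁺ = D \ D⁻`, for every finite multiset `Q` of query vectors,
`Σ_{q ∈ Q} sup_{w ∈ D} max (0, ⟪q, w⟫) = Σ_{q ∈ Q} sup_{w ∈ D⁺} max (0, ⟪q, w⟫)`. -/
theorem colbertP_lossless_pruning {n : ℕ}
    (D Dminus Dplus : Finset (EuclideanSpace ℝ (Fin n)))
    (hminus : ∀ v, v ∈ Dminus ↔ v ∈ D ∧ Dominated v D)
    (hplus : Dplus = D \ Dminus)
    (Q : Multiset (EuclideanSpace ℝ (Fin n))) :
    (Q.map fun q => prunedValue D q).sum = (Q.map fun q => prunedValue Dplus q).sum := by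
  subst hplus
  congr 1
  refine Multiset.map_congr rfl fun q _ =>
    prunedValue_eq_of_undominated Finset.sdiff_subset (fun v hv hnd => ?_) q
  exact Finset.mem_sdiff.mpr ⟨hv, fun hm => hnd ((hminus v).mp hm).2⟩
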